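/- Let d be a rational prime, m ≥ 2, n ≥ 1, and let c_0 be a root of the Misiurewicz polynomial G_{d,m,n}(c). Set K = ℚ(c_0), with ring of integers O_K, and a_i = f_{c_0,d}^i(0) for 1 ≤ i ≤ m+n−1. Then no non-unit element a_i of the critical orbit {a_1, …, a_{m+n−1}} is of the form β^d or −β^d for some β ∈ O_K. -/

import Mathlib

open Polynomial

noncomputable section

/-- `critPoly d i` is `f_{c,d}^i(0)` as a polynomial in the variable `c` over `ℤ`,
where `f_{c,d}(x) = x^d + c`. -/
def critPoly (d : ℕ) : ℕ → Polynomial ℤ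
  | 0 => 0
  | i + 1 => critPoly d i ^ d + X

/-- The field of rational functions in `c` over `ℚ`, realized as the fraction field of `ℤ[c]`. -/
abbrev RF : Type := FractionRing (Polynomial ℤ)

/-- The natural inclusion `ℤ[c] → ℚ(c)`. -/
def toRF (p : Polynomial ℤ) : RF := algebraMap (Polynomial ℤ) RF p

/-- `G_{d,0,n} = ∏_{k ∣ n} (f_{c,d}^k(0))^{μ(n/k)}` as a rational function. -/
def G0Rat (d n : ℕ) : RF :=
  ∏ k ∈ n.divisors, toRF (critPoly d k) ^ (ArithmeticFunction.moebius (n / k))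

/-- `F_{d,m,n}` as a rational function. -/
def FRat (d m n : ℕ) : RF :=
  ∏ k ∈ n.divisors,
    ((toRF (critPoly d (m + k)) - toRF (critPoly d m)) /
      (toRF (critPoly d (m - 1 + k)) - toRF (critPoly d (m - 1)))) ^
      (ArithmeticFunction.moebius (n / k))

/-- `G_{d,m,n}` (for `m ≥ 2`) as a rational function. -/
def GRat (d m n : ℕ) : RF :=
  if n ∣ m - 1 then FRat d m n / FRat d 1 n else FRat d m n

/-- `G : ℤ[c]` is the Misiurewicz polynomial `G_{d,m,n}` (for `m ≥ 2`). -/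
def IsMisiurewicz (d m n : ℕ) (G : Polynomial ℤ) : Prop := toRF G = GRat d m n

/-- `G0 : ℤ[c]` is the polynomial `G_{d,0,n}`. -/
def IsG0 (d n : ℕ) (G0 : Polynomial ℤ) : Prop := toRF G0 = G0Rat d n

/-! ### Divisibility facts in `ℤ[c]` -/

theorem critPoly_zero (d : ℕ) : critPoly d 0 = 0 := rfl

theorem critPoly_succ (d i : ℕ) : critPoly d (i + 1) = critPoly d i ^ d + X := rfl

theorem map_critPoly {S : Type*} [CommRing S] (φ : ℤ[X] →+* S) (d i : ℕ) :
    φ (critPoly d i) = (fun x => x ^ d + φ X)^[i] 0 := by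
  induction i with
  | zero => simp [critPoly_zero]
  | succ i ih => rw [critPoly_succ, map_add, map_pow, ih, Function.iterate_succ_apply']

theorem critPoly_dvd_sub (d k j : ℕ) : critPoly d k ∣ critPoly d (j + k) - critPoly d j := by
  induction j with
  | zero => simp [critPoly_zero]
  | succ j ih =>
    have : critPoly d (j + 1 + k) - critPoly d (j + 1) =
        critPoly d (j + k) ^ d - critPoly d j ^ d := by
      rw [show j + 1 + k = (j + k) + 1 by ring, critPoly_succ, critPoly_succ]; ring
    rw [this]
    exact ih.trans (sub_dvd_pow_sub_pow _ _ _)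

theorem critPoly_sq_dvd_sub (d k j : ℕ) (hd : 2 ≤ d) :
    critPoly d k ^ 2 ∣ critPoly d (j + 1 + k) - critPoly d (j + 1) := by
  induction j with
  | zero =>
    rw [show 0 + 1 + k = k + 1 by ring, critPoly_succ, critPoly_succ, critPoly_zero,
      zero_pow (by omega)]
    simpa using pow_dvd_pow _ hd
  | succ j ih =>
    have : critPoly d (j + 1 + 1 + k) - critPoly d (j + 1 + 1) =
        critPoly d (j + 1 + k) ^ d - critPoly d (j + 1) ^ d := by
      rw [show j + 1 + 1 + k = (j + 1 + k) + 1 by ring, critPoly_succ, critPoly_succ]; ring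
    rw [this]
    exact ih.trans (sub_dvd_pow_sub_pow _ _ _)

theorem critPoly_of_dvd (d p i : ℕ) (hd : 2 ≤ d) (hp : 0 < p) (hi : 0 < i) (h : p ∣ i) :
    ∃ s, critPoly d i = critPoly d p * (1 + critPoly d p * s) := by
  obtain ⟨q, rfl⟩ := h
  have hq : 0 < q := Nat.pos_of_mul_pos_left hi
  clear hi
  induction q, hq using Nat.le_induction with
  | base => exact ⟨0, by simp⟩
  | succ q hq ih =>
    obtain ⟨s, hs⟩ := ih
    obtain ⟨t, ht⟩ := critPoly_sq_dvd_sub d p (p * q - 1) hd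
    have h1 : p * q - 1 + 1 = p * q := Nat.sub_add_cancel (Nat.mul_pos hp hq)
    rw [h1] at ht
    refine ⟨s + t, ?_⟩
    rw [mul_add, mul_one, eq_add_of_sub_eq ht, hs]
    ring

theorem derivative_critPoly (d i : ℕ) :
    ∃ T, derivative (critPoly d (i + 1)) = 1 + C (d : ℤ) * T := by
  refine ⟨critPoly d i ^ (d - 1) * derivative (critPoly d i), ?_⟩
  rw [critPoly_succ]
  simp [derivative_pow]
  ring

/-! ### Periodicity -/

theorem map_critPoly_eq_zero_iff {S : Type*} [CommRing S] (φ : ℤ[X] →+* S) (d k : ℕ) :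
    φ (critPoly d k) = 0 ↔ Function.minimalPeriod (fun x => x ^ d + φ X) 0 ∣ k := by
  rw [map_critPoly, ← Function.isPeriodicPt_iff_minimalPeriod_dvd]
  rfl

theorem dvd_of_map_critPoly_eq {S : Type*} [CommRing S] (φ : ℤ[X] →+* S) (d m k : ℕ)
    (hp : 0 < Function.minimalPeriod (fun x => x ^ d + φ X) (0 : S))
    (h : φ (critPoly d (m + k)) = φ (critPoly d m)) :
    Function.minimalPeriod (fun x => x ^ d + φ X) (0 : S) ∣ k := by
  set p := Function.minimalPeriod (fun x => x ^ d + φ X) (0 : S) with hpd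
  have hle : m ≤ p * m := Nat.le_mul_of_pos_left m hp
  have h2 : φ (critPoly d (p * m + k)) = φ (critPoly d (p * m)) := by
    rw [map_critPoly, map_critPoly] at h ⊢
    have := congrArg (fun x => (fun x => x ^ d + φ X)^[p * m - m] x) h
    simp only [← Function.iterate_add_apply] at this
    rwa [← add_assoc, Nat.sub_add_cancel hle] at this
  rw [(map_critPoly_eq_zero_iff φ d (p * m)).2 (dvd_mul_right _ _),
    map_critPoly_eq_zero_iff] at h2
  exact (Nat.dvd_add_right (dvd_mul_right p m)).1 h2

/-! ### A valuation attached to a prime -/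

theorem exists_val {O : Type*} [CommRing O] [IsDedekindDomain O] (P : Ideal O) [P.IsPrime]
    (hP : P ≠ ⊥) : ∃ ν : O → ℕ, (∀ x y, x ≠ 0 → y ≠ 0 → ν (x * y) = ν x + ν y) ∧
      (∀ x, x ≠ 0 → (ν x = 0 ↔ x ∉ P)) := by
  have hpr : Prime P := Ideal.prime_of_isPrime hP inferInstance
  refine ⟨fun x => multiplicity P (Ideal.span {x}), ?_, ?_⟩
  · intro x y hx hy
    simp only [← Ideal.span_singleton_mul_span_singleton]
    apply multiplicity_mul hpr
    apply FiniteMultiplicity.of_prime_left hpr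
    simp [Ideal.span_singleton_mul_span_singleton, hx, hy]
  · intro x hx
    simp [multiplicity_eq_zero, Ideal.dvd_span_singleton]

/-! ### The maximal ideal of `ℤ[c]` is locally principal -/

theorem local_principal {O : Type*} [CommRing O] [IsDomain O] (e : ℤ[X] →+* O)
    (P : Ideal O) [P.IsPrime] (d : ℕ) (hd : d.Prime) (A T s w : ℤ[X])
    (hA : e A ∈ P) (hder : derivative A = 1 + C (d : ℤ) * T)
    (hs : e s ∉ P) (hw : e s * d = e A * e w) (Q : ℤ[X]) (hQ : e Q ∈ P) :
    ∃ S Y, e S ∉ P ∧ e S * e Q = e A * e Y := by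
  have := Fact.mk hd
  have hdP : (d : O) ∈ P := by
    have : e s * d ∈ P := by rw [hw]; exact P.mul_mem_right _ hA
    exact (Ideal.IsPrime.mem_or_mem ‹_› this).resolve_left hs
  have hd0 : ((d : ℕ) : O ⧸ P) = 0 := by
    have := Ideal.Quotient.eq_zero_iff_mem.2 hdP
    simpa using this
  have : CharP (O ⧸ P) d := (CharP.charP_iff_prime_eq_zero hd).2 hd0
  let ψ : (ZMod d)[X] →+* O ⧸ P :=
    eval₂RingHom (ZMod.castHom dvd_rfl (O ⧸ P)) (Ideal.Quotient.mk P (e X))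
  let π : ℤ[X] →+* (ZMod d)[X] := mapRingHom (Int.castRingHom (ZMod d))
  have hψ : ∀ F, ψ (π F) = Ideal.Quotient.mk P (e F) := by
    intro F
    have : ψ.comp π = (Ideal.Quotient.mk P).comp e := by
      apply Polynomial.ringHom_ext
      · intro a; simp [ψ, π]
      · simp [ψ, π]
    exact congrArg (fun f => f F) this
  have hmem : ∀ F, ψ (π F) = 0 ↔ e F ∈ P := by
    intro F; rw [hψ, Ideal.Quotient.eq_zero_iff_mem]
  obtain ⟨g, hg⟩ := (IsPrincipalIdealRing.principal (RingHom.ker ψ)).principal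
  have hgdvd : ∀ F, ψ F = 0 ↔ g ∣ F := by
    intro F
    rw [← RingHom.mem_ker, hg, Ideal.submodule_span_eq, Ideal.mem_span_singleton]
  obtain ⟨q, hq⟩ := (hgdvd _).1 ((hmem Q).2 hQ)
  obtain ⟨h, hh⟩ := (hgdvd _).1 ((hmem A).2 hA)
  have hh0 : ψ h ≠ 0 := by
    intro h0
    obtain ⟨h', rfl⟩ := (hgdvd _).1 h0
    have h1 : derivative (π A) = 1 := by
      have : derivative (π A) = π (derivative A) := by simp [π, derivative_map]
      rw [this, hder]
      simp [π]
    rw [hh] at h1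
    have h2 : g ∣ 1 := by
      rw [← h1]
      simp only [derivative_mul]
      refine dvd_add (dvd_mul_of_dvd_right (dvd_mul_right _ _) _) (dvd_mul_right _ _)
    have := (hgdvd 1).2 h2
    simp at this
  have hsurj : Function.Surjective π :=
    Polynomial.map_surjective _ (ZMod.ringHom_surjective _)
  obtain ⟨H, rfl⟩ := hsurj h
  obtain ⟨Y, rfl⟩ := hsurj q
  have hz : π (H * Q - A * Y) = 0 := by
    rw [map_sub, map_mul, map_mul, hq, hh]; ring
  have hdv : C (d : ℤ) ∣ H * Q - A * Y := by
    rw [C_dvd_iff_dvd_coeff]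
    intro i
    have := congrArg (fun F => coeff F i) hz
    simp only [π, coe_mapRingHom, coeff_map, coeff_zero] at this
    exact (ZMod.intCast_zmod_eq_zero_iff_dvd _ _).1 (by simpa using this)
  obtain ⟨Z, hZ⟩ := hdv
  refine ⟨s * H, s * Y + w * Z, ?_, ?_⟩
  · rw [map_mul]
    intro hc
    rcases Ideal.IsPrime.mem_or_mem ‹_› hc with hc | hc
    · exact hs hc
    · exact hh0 ((hmem H).2 hc)
  · have h1 : e (H * Q) = e (A * Y) + d * e Z := by
      rw [eq_add_of_sub_eq hZ]; simp [add_comm]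
    simp only [map_mul, map_add] at h1 ⊢
    linear_combination e s * h1 + e Z * hw

theorem val_dvd {O : Type*} [CommRing O] [IsDomain O] (e : ℤ[X] →+* O)
    (P : Ideal O) (a : O) (ha : a ∈ P) (ha0 : a ≠ 0)
    (H : ∀ Q, e Q ∈ P → ∃ S Y, e S ∉ P ∧ e S * e Q = a * e Y)
    (ν : O → ℕ) (hν : ∀ x y, x ≠ 0 → y ≠ 0 → ν (x * y) = ν x + ν y)
    (hν0 : ∀ x, x ≠ 0 → (ν x = 0 ↔ x ∉ P)) (N : ℕ) :
    ∀ Q, e Q ≠ 0 → ν (e Q) = N → ν a ∣ N := by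
  induction N using Nat.strong_induction_on with
  | _ N ih =>
    intro Q hQ0 hQ
    by_cases hQP : e Q ∈ P
    · obtain ⟨S, Y, hS, hSY⟩ := H Q hQP
      have hS0 : e S ≠ 0 := fun h => hS (h ▸ P.zero_mem)
      have hY0 : e Y ≠ 0 := by
        intro h
        rw [h, mul_zero] at hSY
        exact mul_ne_zero hS0 hQ0 hSY
      have h1 := congrArg ν hSY
      rw [hν _ _ hS0 hQ0, hν _ _ ha0 hY0, (hν0 _ hS0).2 hS, zero_add, hQ] at h1
      have h2 : ν a ≠ 0 := fun h => (hν0 _ ha0).1 h ha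
      rw [h1]
      exact dvd_add dvd_rfl (ih (ν (e Y)) (by omega) Y hY0 rfl)
    · rw [← hQ, (hν0 _ hQ0).2 hQP]; exact dvd_zero _

/-! ### Non-periodic preperiodic parameters -/

theorem exists_local_relation {O : Type*} [CommRing O] [IsDomain O] (e : ℤ[X] →+* O)
    (P : Ideal O) [P.IsPrime] (d : ℕ) (hd : 2 ≤ d)
    (hne : ∀ k, 0 < k → e (critPoly d k) ≠ 0) (M k i : ℕ) (hk : 0 < k)
    (h1 : e (critPoly d (M + 1 + k)) = e (critPoly d (M + 1)))
    (h2 : e (critPoly d (M + k)) ≠ e (critPoly d M))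
    (hi : 0 < i) (hiP : e (critPoly d i) ∈ P) :
    ∃ s w, e s ∉ P ∧ e s * d = e (critPoly d i) * e w := by
  let φ : ℤ[X] →+* O ⧸ P := (Ideal.Quotient.mk P).comp e
  have hφ : ∀ F, φ F = 0 ↔ e F ∈ P := fun F => Ideal.Quotient.eq_zero_iff_mem
  obtain ⟨p, hpd⟩ : ∃ p, p = Function.minimalPeriod (fun x => x ^ d + φ X) (0 : O ⧸ P) :=
    ⟨_, rfl⟩
  have hz : ∀ j, e (critPoly d j) ∈ P ↔ p ∣ j := by
    intro j; rw [← hφ, map_critPoly_eq_zero_iff, hpd]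
  have hpi : p ∣ i := (hz i).1 hiP
  have hp : 0 < p := Nat.pos_of_dvd_of_pos hpi hi
  have hpk : p ∣ k := by
    rw [hpd]
    apply dvd_of_map_critPoly_eq φ d (M + 1) k (hpd ▸ hp)
    simp [φ, h1]
  have hApP : e (critPoly d p) ∈ P := (hz p).2 dvd_rfl
  have hAp0 : e (critPoly d p) ≠ 0 := hne p hp
  have hunit : ∀ t, e (1 + critPoly d p * t) ∉ P := by
    intro t ht
    rw [map_add, map_one, map_mul] at ht
    have := (P.add_mem_iff_left (P.mul_mem_right (e t) hApP)).1 ht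
    exact (Ideal.ne_top_iff_one P).1 (Ideal.IsPrime.ne_top ‹_›) this
  have hpow : e (critPoly d (M + k)) ^ d = e (critPoly d M) ^ d := by
    rw [show M + 1 + k = M + k + 1 by ring, critPoly_succ, critPoly_succ] at h1
    simpa using h1
  obtain ⟨u, v, huv, hv, hne', hpow'⟩ : ∃ u v, critPoly d p ∣ u - v ∧ e v ∉ P ∧ e u ≠ e v ∧
      e u ^ d = e v ^ d := by
    by_cases hV : e (critPoly d M) ∈ P
    · have hpM := (hz M).1 hV
      have hM : 0 < M := by
        rcases Nat.eq_zero_or_pos M with rfl | h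
        · exfalso
          rw [critPoly_zero, map_zero, zero_pow (by omega), zero_add] at hpow
          exact hne k hk (pow_eq_zero_iff (by omega) |>.1 hpow)
        · exact h
      obtain ⟨s, hs⟩ := critPoly_of_dvd d p M hd hp hM hpM
      obtain ⟨s', hs'⟩ := critPoly_of_dvd d p (M + k) hd hp (by omega) (dvd_add hpM hpk)
      refine ⟨1 + critPoly d p * s', 1 + critPoly d p * s, ⟨s' - s, by ring⟩, hunit _, ?_, ?_⟩
      · intro h; apply h2; rw [hs, hs', map_mul, h, map_mul]
      · rw [hs, hs', map_mul, map_mul, mul_pow, mul_pow] at hpow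
        exact mul_left_cancel₀ (pow_ne_zero _ hAp0) hpow
    · refine ⟨_, _, ?_, hV, h2, hpow⟩
      refine dvd_trans ?_ (critPoly_dvd_sub d k M)
      obtain ⟨t, ht⟩ := critPoly_of_dvd d p k hd hp hk hpk
      exact ⟨_, ht⟩
  obtain ⟨t, ht⟩ := critPoly_of_dvd d p i hd hp hi hpi
  have hΦ : ∑ j ∈ Finset.range d, e u ^ j * e v ^ (d - 1 - j) = 0 := by
    have := geom_sum₂_mul (e u) (e v) d
    rw [hpow', sub_self] at this
    exact (mul_eq_zero.1 this).resolve_right (sub_ne_zero.2 hne')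
  obtain ⟨z, hz'⟩ : critPoly d p ∣ (∑ j ∈ Finset.range d, u ^ j * v ^ (d - 1 - j)) -
      (d : ℤ[X]) * v ^ (d - 1) := by
    refine huv.trans ?_
    have : (d : ℤ[X]) * v ^ (d - 1) = ∑ j ∈ Finset.range d, v ^ j * v ^ (d - 1 - j) := by
      rw [Finset.sum_congr rfl (g := fun _ => v ^ (d - 1))]
      · simp
      · intro j hj
        rw [← pow_add]; congr 1
        have := Finset.mem_range.1 hj; omega
    rw [this, ← Finset.sum_sub_distrib]
    refine Finset.dvd_sum fun j _ => ?_
    rw [← sub_mul]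
    exact dvd_mul_of_dvd_left (sub_dvd_pow_sub_pow _ _ _) _
  have hz2 := congrArg e hz'
  simp only [map_sub, map_sum, map_mul, map_pow, map_natCast, hΦ] at hz2
  refine ⟨v ^ (d - 1) * (1 + critPoly d p * t), -z, ?_, ?_⟩
  · rw [map_mul, map_pow]
    intro hc
    rcases Ideal.IsPrime.mem_or_mem ‹_› hc with hc | hc
    · exact hv (Ideal.IsPrime.mem_of_pow_mem ‹_› _ hc)
    · exact hunit _ hc
  · rw [ht]
    simp only [map_mul, map_pow, map_neg]
    linear_combination (-e (1 + critPoly d p * t)) * hz2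

/-! ### Roots of Misiurewicz polynomials are strictly preperiodic -/

theorem sum_moebius_filter (n p : ℕ) (hn : 0 < n) (hpn : p ≠ n) (x : ℤ) :
    ∑ k ∈ n.divisors, ArithmeticFunction.moebius (n / k) * (if p ∣ k then x else 0) = 0 := by
  by_cases hp : p ∣ n
  · obtain ⟨q, rfl⟩ := hp
    have hp0 : 0 < p := Nat.pos_of_mul_pos_right hn
    have hq0 : 0 < q := Nat.pos_of_mul_pos_left hn
    have hq1 : q ≠ 1 := by rintro rfl; simp at hpn
    have h1 := Nat.sum_div_divisors (p * q)
      (fun k => ArithmeticFunction.moebius k * (if p ∣ p * q / k then x else 0))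
    have h2 : ∑ k ∈ (p * q).divisors,
        ArithmeticFunction.moebius (p * q / k) * (if p ∣ k then x else 0) =
        ∑ k ∈ (p * q).divisors, (fun k => ArithmeticFunction.moebius k *
          (if p ∣ p * q / k then x else 0)) (p * q / k) := by
      refine Finset.sum_congr rfl fun k hk => ?_
      have := Nat.div_div_self (Nat.dvd_of_mem_divisors hk) hn.ne'
      simp only [this]
    rw [h2, h1]
    simp only [mul_ite, mul_zero]
    rw [← Finset.sum_filter]
    have h3 : (p * q).divisors.filter (fun k => p ∣ p * q / k) = q.divisors := by
      ext k
      simp only [Finset.mem_filter, Nat.mem_divisors]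
      constructor
      · rintro ⟨⟨⟨r, hr⟩, _⟩, hk2⟩
        refine ⟨?_, hq0.ne'⟩
        have hk0 : 0 < k := by
          rcases Nat.eq_zero_or_pos k with rfl | h
          · simp at hr; omega
          · exact h
        rw [hr, Nat.mul_div_cancel_left _ hk0] at hk2
        obtain ⟨r', rfl⟩ := hk2
        refine ⟨r', Nat.eq_of_mul_eq_mul_left hp0 ?_⟩
        rw [hr]; ring
      · rintro ⟨hk, _⟩
        refine ⟨⟨dvd_mul_of_dvd_right hk _, hn.ne'⟩, ?_⟩
        rw [Nat.mul_div_assoc _ hk]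
        exact dvd_mul_right _ _
    rw [h3, ← Finset.sum_mul]
    have h4 : ∑ k ∈ q.divisors, ArithmeticFunction.moebius k = 0 := by
      rw [← ArithmeticFunction.coe_zeta_mul_apply, ArithmeticFunction.coe_zeta_mul_moebius,
        ArithmeticFunction.one_apply_ne hq1]
    rw [h4, zero_mul]
  · refine Finset.sum_eq_zero fun k hk => ?_
    rw [if_neg (fun h => hp (h.trans (Nat.dvd_of_mem_divisors hk))), mul_zero]

/-- `r` equals `t ^ z` up to a factor that is a unit at the point defined by `φ`. -/
def IsOrd {O : Type*} [CommRing O] (φ : ℤ[X] →+* O) (t : ℤ[X]) (r : RF) (z : ℤ) : Prop :=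
  ∃ u w, φ u ≠ 0 ∧ φ w ≠ 0 ∧ r * toRF w = toRF t ^ z * toRF u

theorem toRF_mul (a b : ℤ[X]) : toRF (a * b) = toRF a * toRF b := map_mul _ _ _

theorem toRF_pow (a : ℤ[X]) (n : ℕ) : toRF (a ^ n) = toRF a ^ n := map_pow _ _ _

theorem toRF_inj {a b : ℤ[X]} (h : toRF a = toRF b) : a = b := IsFractionRing.injective _ _ h

theorem toRF_ne_zero {a : ℤ[X]} (h : a ≠ 0) : toRF a ≠ 0 := by
  intro h0
  apply h
  apply toRF_inj
  rw [h0]; exact (map_zero _).symm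

section IsOrd

variable {O : Type*} [CommRing O] [IsDomain O] {φ : ℤ[X] →+* O} {t : ℤ[X]}

theorem IsOrd.one : IsOrd φ t 1 0 := ⟨1, 1, by simp, by simp, by simp⟩

theorem IsOrd.mul (ht : t ≠ 0) {r r' : RF} {z z' : ℤ} (h : IsOrd φ t r z)
    (h' : IsOrd φ t r' z') : IsOrd φ t (r * r') (z + z') := by
  obtain ⟨u, w, hu, hw, h⟩ := h
  obtain ⟨u', w', hu', hw', h'⟩ := h'
  refine ⟨u * u', w * w', by simp [hu, hu'], by simp [hw, hw'], ?_⟩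
  rw [toRF_mul, toRF_mul, zpow_add₀ (toRF_ne_zero ht)]
  linear_combination r' * toRF w' * h + toRF t ^ z * toRF u * h'

theorem poly_ne_zero_of_map {u : ℤ[X]} (h : φ u ≠ 0) : u ≠ 0 := by
  rintro rfl; simp at h

theorem IsOrd.zpow (ht : t ≠ 0) {r : RF} {z : ℤ} (h : IsOrd φ t r z) (j : ℤ) :
    IsOrd φ t (r ^ j) (j * z) := by
  obtain ⟨u, w, hu, hw, h⟩ := h
  have hu0 := toRF_ne_zero (poly_ne_zero_of_map hu)
  have hw0 := toRF_ne_zero (poly_ne_zero_of_map hw)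
  have hr : r = toRF t ^ z * toRF u / toRF w := by rw [← h, mul_div_cancel_right₀ _ hw0]
  obtain ⟨n, rfl | rfl⟩ := j.eq_nat_or_neg
  · refine ⟨u ^ n, w ^ n, by simp [hu], by simp [hw], ?_⟩
    rw [toRF_pow, toRF_pow, mul_comm (n : ℤ) z, zpow_mul, zpow_natCast, zpow_natCast,
      ← mul_pow, h, mul_pow]
  · refine ⟨w ^ n, u ^ n, by simp [hw], by simp [hu], ?_⟩
    have ht0 := zpow_ne_zero z (toRF_ne_zero ht)
    rw [toRF_pow, toRF_pow, mul_comm (-(n : ℤ)) z, zpow_mul, zpow_neg, zpow_neg, zpow_natCast,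
      zpow_natCast, hr, div_pow, mul_pow]
    field_simp

theorem IsOrd.div (ht : t ≠ 0) {r r' : RF} {z z' : ℤ} (h : IsOrd φ t r z)
    (h' : IsOrd φ t r' z') : IsOrd φ t (r / r') (z - z') := by
  have := h.mul ht (h'.zpow ht (-1))
  rw [zpow_neg_one, neg_one_mul] at this
  exact this

theorem IsOrd.prod (ht : t ≠ 0) {ι : Type*} (s : Finset ι) (r : ι → RF) (z : ι → ℤ)
    (h : ∀ k ∈ s, IsOrd φ t (r k) (z k)) : IsOrd φ t (∏ k ∈ s, r k) (∑ k ∈ s, z k) := by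
  classical
  induction s using Finset.induction_on with
  | empty => exact IsOrd.one
  | insert a s ha ih =>
    rw [Finset.prod_insert ha, Finset.sum_insert ha]
    exact (h a (Finset.mem_insert_self _ _)).mul ht
      (ih fun k hk => h k (Finset.mem_insert_of_mem hk))

theorem IsOrd.ne_zero {G : ℤ[X]} (h : IsOrd φ t (toRF G) 0) : φ G ≠ 0 := by
  obtain ⟨u, w, hu, hw, h⟩ := h
  rw [zpow_zero, one_mul, ← toRF_mul] at h
  have := congrArg φ (toRF_inj h)
  intro h0
  rw [map_mul, h0, zero_mul] at this
  exact hu this.symm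

theorem IsOrd.of_poly {R u : ℤ[X]} {j : ℕ} (hu : φ u ≠ 0) (h : R = t ^ j * u) :
    IsOrd φ t (toRF R) j :=
  ⟨u, 1, hu, by simp, by
    rw [← toRF_mul, h, mul_one, toRF_mul, toRF_pow, zpow_natCast]⟩

end IsOrd

theorem critPoly_eval_lt (d : ℕ) (hd : 0 < d) (j : ℕ) :
    0 ≤ (critPoly d j).eval 1 ∧ (critPoly d j).eval 1 < (critPoly d (j + 1)).eval 1 := by
  have h0 : ∀ j, 0 ≤ (critPoly d j).eval 1 := by
    intro j
    induction j with
    | zero => simp [critPoly_zero]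
    | succ j ih => rw [critPoly_succ]; simp; positivity
  refine ⟨h0 j, ?_⟩
  rw [critPoly_succ]
  simp only [eval_add, eval_pow, eval_X]
  have : (critPoly d j).eval 1 ≤ (critPoly d j).eval 1 ^ d := by
    rcases (h0 j).eq_or_lt with h | h
    · rw [← h]; simp [hd.ne']
    · exact le_self_pow₀ (by omega) hd.ne'
  omega

theorem critPoly_ne (d : ℕ) (hd : 0 < d) (j k : ℕ) (hk : 0 < k) :
    critPoly d (j + k) ≠ critPoly d j := by
  intro h
  have hm : StrictMono fun j => (critPoly d j).eval 1 :=
    strictMono_nat_of_lt_succ fun j => (critPoly_eval_lt d hd j).2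
  have := hm.injective (congrArg (fun F => F.eval 1) h)
  omega

/-- The polynomial `(f^{m+1+k}(0) - f^{m+1}(0)) / (f^{m+k}(0) - f^{m}(0))`. -/
def ratioPoly (d m k : ℕ) : ℤ[X] :=
  ∑ j ∈ Finset.range d, critPoly d (m + k) ^ j * critPoly d m ^ (d - 1 - j)

theorem ratioPoly_mul (d m k : ℕ) :
    ratioPoly d m k * (critPoly d (m + k) - critPoly d m) =
      critPoly d (m + 1 + k) - critPoly d (m + 1) := by
  rw [ratioPoly, geom_sum₂_mul, show m + 1 + k = m + k + 1 by ring, critPoly_succ, critPoly_succ]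
  ring

theorem FRat_eq (d m n : ℕ) (hd : 0 < d) :
    FRat d (m + 1) n = ∏ k ∈ n.divisors,
      toRF (ratioPoly d m k) ^ (ArithmeticFunction.moebius (n / k)) := by
  unfold FRat
  refine Finset.prod_congr rfl fun k hk => ?_
  congr 1
  have hs : ∀ a b, toRF a - toRF b = toRF (a - b) := fun a b => (map_sub _ _ _).symm
  rw [hs, hs, Nat.add_sub_cancel, ← ratioPoly_mul, toRF_mul, mul_div_cancel_right₀]
  exact toRF_ne_zero (sub_ne_zero.2 (critPoly_ne d hd m k (Nat.pos_of_mem_divisors hk)))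

theorem FRat_isOrd {O : Type*} [CommRing O] [IsDomain O] (φ : ℤ[X] →+* O) (t : ℤ[X])
    (ht : t ≠ 0) (d m n : ℕ) (hd : 0 < d) (z : ℕ → ℤ)
    (h : ∀ k, 0 < k → IsOrd φ t (toRF (ratioPoly d m k)) (z k)) :
    IsOrd φ t (FRat d (m + 1) n)
      (∑ k ∈ n.divisors, ArithmeticFunction.moebius (n / k) * z k) := by
  rw [FRat_eq d m n hd]
  exact IsOrd.prod ht _ _ _ fun k hk => (h k (Nat.pos_of_mem_divisors hk)).zpow ht _

theorem ratioPoly_ne_zero {O : Type*} [CommRing O] [IsDomain O] (φ : ℤ[X] →+* O)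
    (d m k : ℕ) (h : φ (critPoly d (m + 1 + k)) ≠ φ (critPoly d (m + 1))) :
    φ (ratioPoly d m k) ≠ 0 := by
  intro h0
  have := congrArg φ (ratioPoly_mul d m k)
  rw [map_mul, h0, zero_mul, map_sub] at this
  exact h (sub_eq_zero.1 this.symm)

/-- A root of the Misiurewicz polynomial is preperiodic. -/
theorem preperiodic_of_root {O : Type*} [CommRing O] [IsDomain O] (φ : ℤ[X] →+* O)
    (d m n : ℕ) (hd : 2 ≤ d) (G : ℤ[X]) (hG : IsMisiurewicz d (m + 1) n G) (h0 : φ G = 0) :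
    ∃ M k, 0 < k ∧ φ (critPoly d (M + k)) = φ (critPoly d M) := by
  by_contra! hcon
  have hF : ∀ m, IsOrd φ 1 (FRat d (m + 1) n) 0 := by
    intro m
    have := FRat_isOrd φ 1 one_ne_zero d m n (by omega) (fun _ => 0) (fun k hk => by
      have := IsOrd.of_poly (t := 1) (j := 0) (R := ratioPoly d m k)
        (ratioPoly_ne_zero φ d m k (hcon _ _ hk)) (by simp)
      simpa using this)
    simpa using this
  have : IsOrd φ 1 (toRF G) 0 := by
    rw [hG, GRat]
    split_ifs
    · simpa using (hF m).div one_ne_zero (hF 0)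
    · exact hF m
  exact this.ne_zero h0

/-- A root of the Misiurewicz polynomial is not periodic. -/
theorem not_periodic_of_root {O : Type*} [CommRing O] [IsDomain O] [CharZero O]
    (φ : ℤ[X] →+* O) (d m n : ℕ) (hd : 2 ≤ d) (hn : 0 < n) (G : ℤ[X])
    (hG : IsMisiurewicz d (m + 1) n G) (h0 : φ G = 0) (k : ℕ) (hk : 0 < k) :
    φ (critPoly d k) ≠ 0 := by
  intro hper
  obtain ⟨p, hpd⟩ : ∃ p, p = Function.minimalPeriod (fun x => x ^ d + φ X) (0 : O) :=
    ⟨_, rfl⟩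
  have hz : ∀ j, φ (critPoly d j) = 0 ↔ p ∣ j := by
    intro j; rw [map_critPoly_eq_zero_iff, hpd]
  have hp : 0 < p := Nat.pos_of_dvd_of_pos ((hz k).1 hper) hk
  set t := critPoly d p with htd
  have ht : t ≠ 0 := by
    have := critPoly_ne d (by omega) 0 p hp
    simpa [critPoly_zero] using this
  have hφt : φ t = 0 := (hz p).2 dvd_rfl
  have hdO : (d : O) ≠ 0 := by exact_mod_cast (by omega : d ≠ 0)
  have hR : ∀ m k, 0 < k → IsOrd φ t (toRF (ratioPoly d m k))
      (if p ∣ k then (if p ∣ m then ((d - 1 : ℕ) : ℤ) else 0) else 0) := by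
    intro m k hk
    by_cases hpk : p ∣ k
    · rw [if_pos hpk]
      by_cases hpm : p ∣ m
      · rw [if_pos hpm]
        obtain ⟨s, hs⟩ := critPoly_of_dvd d p (m + k) hd hp (by omega) (dvd_add hpm hpk)
        rw [← htd] at hs
        rcases Nat.eq_zero_or_pos m with rfl | hm
        · refine IsOrd.of_poly (u := (1 + t * s) ^ (d - 1)) (by simp [hφt]) ?_
          rw [← mul_pow, ← hs, ratioPoly, Finset.sum_eq_single (d - 1)]
          · simp
          · intro j hj hj'
            have := Finset.mem_range.1 hj
            rw [critPoly_zero, zero_pow (by omega), mul_zero]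
          · intro h; exact absurd (Finset.mem_range.2 (by omega)) h
        · obtain ⟨s', hs'⟩ := critPoly_of_dvd d p m hd hp hm hpm
          rw [← htd] at hs'
          refine IsOrd.of_poly
            (u := ∑ j ∈ Finset.range d, (1 + t * s) ^ j * (1 + t * s') ^ (d - 1 - j))
            (by simp [hφt, hdO]) ?_
          rw [ratioPoly, Finset.mul_sum]
          refine Finset.sum_congr rfl fun j hj => ?_
          have := Finset.mem_range.1 hj
          rw [hs, hs', mul_pow, mul_pow]
          have h3 : t ^ (d - 1) = t ^ j * t ^ (d - 1 - j) := by
            rw [← pow_add]; congr 1; omega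
          rw [h3]; ring
      · rw [if_neg hpm]
        have hm0 : φ (critPoly d m) ≠ 0 := fun h => hpm ((hz m).1 h)
        have heq : φ (critPoly d (m + k)) = φ (critPoly d m) := by
          obtain ⟨s, hs⟩ := critPoly_dvd_sub d k m
          have := congrArg φ hs
          rw [map_mul, (hz k).2 hpk, zero_mul, map_sub] at this
          exact sub_eq_zero.1 this
        have h1 : φ (ratioPoly d m k) ≠ 0 := by
          rw [ratioPoly]
          simp only [map_sum, map_mul, map_pow, heq]
          rw [Finset.sum_congr rfl (g := fun _ => φ (critPoly d m) ^ (d - 1))]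
          · simp [hdO, hm0]
          · intro j hj
            rw [← pow_add]; congr 1
            have := Finset.mem_range.1 hj; omega
        simpa using IsOrd.of_poly (t := t) (j := 0) h1 (by simp)
    · rw [if_neg hpk]
      have h1 : φ (ratioPoly d m k) ≠ 0 := by
        apply ratioPoly_ne_zero
        intro h
        exact hpk (hpd ▸ dvd_of_map_critPoly_eq φ d (m + 1) k (hpd ▸ hp) h)
      simpa using IsOrd.of_poly (t := t) (j := 0) h1 (by simp)
  have hF := fun m => FRat_isOrd φ t ht d m n (by omega) _ (hR m)
  have : IsOrd φ t (toRF G) 0 := by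
    rw [hG, GRat, Nat.add_sub_cancel]
    split_ifs with hnm
    · have h1 := (hF m).div ht (hF 0)
      convert h1 using 1
      symm
      rw [sub_eq_zero]
      refine Finset.sum_congr rfl fun k hk => ?_
      by_cases hpk : p ∣ k
      · have hpm : p ∣ m := hpk.trans ((Nat.dvd_of_mem_divisors hk).trans hnm)
        simp [hpm]
      · simp [hpk]
    · convert hF m using 1
      symm
      by_cases hpm : p ∣ m
      · exact sum_moebius_filter n p hn (by rintro rfl; exact hnm hpm) _
      · simp [hpm]
  exact this.ne_zero h0

theorem orbit_not_pow_aux (d m n : ℕ) (hd : d.Prime) (hn : 0 < n)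
    (G : Polynomial ℤ) (hG : IsMisiurewicz d (m + 1) n G)
    (K : Type*) [Field K] [NumberField K] (c₀ : NumberField.RingOfIntegers K)
    (hroot : Polynomial.aeval (c₀ : K) G = 0)
    (hgen : Algebra.adjoin ℚ {(c₀ : K)} = ⊤)
    (i : ℕ) (hi : 0 < i)
    (hnu : ¬ IsUnit ((fun x => x ^ d + c₀)^[i] 0))
    (β ε : NumberField.RingOfIntegers K) (hε : IsUnit ε) :
    (fun x => x ^ d + c₀)^[i] 0 ≠ ε * β ^ d := by
  intro hβ
  have hd2 := hd.two_le
  let e : ℤ[X] →+* NumberField.RingOfIntegers K := (aeval c₀).toRingHom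
  have he : ∀ F, e F = aeval c₀ F := fun F => rfl
  have heX : e X = c₀ := by simp [he]
  have hcoe : ∀ F : ℤ[X], ((e F : NumberField.RingOfIntegers K) : K) = aeval (c₀ : K) F := by
    intro F
    rw [he]
    exact (aeval_algebraMap_apply K c₀ F).symm
  have hG0 : e G = 0 := by
    apply NumberField.RingOfIntegers.ext
    rw [hcoe, hroot]; simp
  have ha : e (critPoly d i) = (fun x => x ^ d + c₀)^[i] 0 := by
    rw [map_critPoly, heX]
  rw [← ha] at hnu hβ
  have hne := not_periodic_of_root e d m n hd2 hn G hG hG0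
  -- minimal preperiod
  have hpre := preperiodic_of_root e d m n hd2 G hG hG0
  classical
  obtain ⟨k, hk, hMk⟩ := Nat.find_spec hpre
  have hmin := fun j => Nat.find_min hpre (m := j)
  obtain ⟨M, hM⟩ : ∃ M, Nat.find hpre = M + 1 := by
    rcases h : Nat.find hpre with _ | M
    · rw [h, zero_add, critPoly_zero, map_zero] at hMk
      exact absurd hMk (hne k hk)
    · exact ⟨M, rfl⟩
  rw [hM] at hMk
  have hMk2 : e (critPoly d (M + k)) ≠ e (critPoly d M) := fun h =>
    hmin M (by omega) ⟨k, hk, h⟩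
  -- the prime
  obtain ⟨P, hPmax, haP⟩ := exists_max_ideal_of_mem_nonunits hnu
  have hPp : P.IsPrime := hPmax.isPrime
  have ha0 := hne i hi
  have hPbot : P ≠ ⊥ := by
    rintro rfl
    exact ha0 (by simpa using haP)
  obtain ⟨s, w, hs, hw⟩ := exists_local_relation e P d hd2 hne M k i hk hMk hMk2 hi haP
  obtain ⟨T, hT⟩ : ∃ T, derivative (critPoly d i) = 1 + C (d : ℤ) * T := by
    obtain ⟨j, rfl⟩ : ∃ j, i = j + 1 := ⟨i - 1, by omega⟩
    exact derivative_critPoly d j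
  obtain ⟨ν, hν, hν0⟩ := exists_val P hPbot
  have hdvd := fun Q hQ => val_dvd e P _ haP ha0
    (local_principal e P d hd _ T s w haP hT hs hw) ν hν hν0 _ Q hQ rfl
  have hβ0 : β ≠ 0 := by
    rintro rfl
    rw [zero_pow (by omega), mul_zero] at hβ
    exact ha0 hβ
  -- a multiple of β in ℤ[c₀]
  obtain ⟨N, Q, hN, hNQ⟩ : ∃ (N : ℤ) (Q : ℤ[X]), N ≠ 0 ∧ (N : NumberField.RingOfIntegers K) * β
      = e Q := by
    have h1 : (β : K) ∈ Algebra.adjoin ℚ {(c₀ : K)} := by rw [hgen]; trivial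
    rw [Algebra.adjoin_singleton_eq_range_aeval] at h1
    obtain ⟨F, hF⟩ := h1
    obtain ⟨b, hbm, hb⟩ := IsLocalization.integerNormalization_spec (nonZeroDivisors ℤ) F
    refine ⟨b, IsLocalization.integerNormalization (nonZeroDivisors ℤ) F,
      nonZeroDivisors.ne_zero hbm, ?_⟩
    apply NumberField.RingOfIntegers.ext
    rw [hcoe]
    have h2 := congrArg (aeval (c₀ : K)) hb
    rw [aeval_map_algebraMap] at h2
    rw [h2]
    have h3 : (aeval (c₀ : K)) F = β := hF
    simp [h3]
  have hNO : (N : NumberField.RingOfIntegers K) ≠ 0 := by exact_mod_cast hN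
  have hQ0 : e Q ≠ 0 := by rw [← hNQ]; exact mul_ne_zero hNO hβ0
  have hd1 := hdvd Q hQ0
  have hd2' := hdvd (C N) (by simpa [he] using hNO)
  rw [show e (C N) = (N : NumberField.RingOfIntegers K) by simp [he]] at hd2'
  rw [← hNQ, hν _ _ hNO hβ0] at hd1
  have hd3 : ν (e (critPoly d i)) ∣ ν β := (Nat.dvd_add_right hd2').1 hd1
  have hνpow : ∀ j, ν (β ^ j) = j * ν β := by
    intro j
    induction j with
    | zero =>
      rw [pow_zero, zero_mul, hν0 _ one_ne_zero]
      exact (Ideal.ne_top_iff_one P).1 hPp.ne_top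
    | succ j ih => rw [pow_succ, hν _ _ (pow_ne_zero _ hβ0) hβ0, ih]; ring
  have hνε : ν ε = 0 :=
    (hν0 _ hε.ne_zero).2 fun h => hPp.ne_top (Ideal.eq_top_of_isUnit_mem _ h hε)
  have hfin := congrArg ν hβ
  rw [hν _ _ hε.ne_zero (pow_ne_zero _ hβ0), hνε, hνpow, zero_add] at hfin
  have hpos : ν (e (critPoly d i)) ≠ 0 := fun h => (hν0 _ ha0).1 h haP
  have hβpos : 0 < ν β := by
    rcases Nat.eq_zero_or_pos (ν β) with h | h
    · rw [h, mul_zero] at hfin; exact absurd hfin hpos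
    · exact h
  have hle := Nat.le_of_dvd hβpos hd3
  nlinarith

/-- Let `d` be a prime, `m ≥ 2`, `n ≥ 1`, and `c₀` a root of `G_{d,m,n}`,
`K = ℚ(c₀)`, `a_i = f_{c₀,d}^i(0)` for `1 ≤ i ≤ m+n-1`. Then no non-unit element `a_i` of
the critical orbit is of the form `β^d` or `-β^d` with `β ∈ O_K`. -/
theorem orbit_not_pow (d m n : ℕ) (hd : d.Prime) (hm : 2 ≤ m) (hn : 1 ≤ n)
    (G : Polynomial ℤ) (hG : IsMisiurewicz d m n G)
    (K : Type*) [Field K] [NumberField K] (c₀ : NumberField.RingOfIntegers K)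
    (hroot : Polynomial.aeval (c₀ : K) G = 0)
    (hgen : Algebra.adjoin ℚ {(c₀ : K)} = ⊤)
    (i : ℕ) (hi1 : 1 ≤ i) (hi2 : i ≤ m + n - 1)
    (hnu : ¬ IsUnit ((fun x => x ^ d + c₀)^[i] 0))
    (β : NumberField.RingOfIntegers K) :
    (fun x => x ^ d + c₀)^[i] 0 ≠ β ^ d ∧ (fun x => x ^ d + c₀)^[i] 0 ≠ -β ^ d := by
  obtain ⟨m, rfl⟩ : ∃ j, m = j + 1 := ⟨m - 1, by omega⟩
  refine ⟨?_, ?_⟩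
  · have := orbit_not_pow_aux d m n hd hn G hG K c₀ hroot hgen i hi1 hnu β 1 isUnit_one
    simpa using this
  · have := orbit_not_pow_aux d m n hd hn G hG K c₀ hroot hgen i hi1 hnu β (-1) isUnit_one.neg
    simpa using this
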